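/- Let A₁, A₂ be real 2×2 matrices and let P₀ = ℝ², P₁ = (A₁+iI)ℝ², P₂ = (A₂+iI)ℝ² be totally-real planes in ℂ² (i.e., Pⱼ ∩ iPⱼ = {0} for j = 0,1,2). Assume that each of the pairwise unions P₀ ∪ P₁, P₀ ∪ P₂, P₁ ∪ P₂ is locally polynomially convex at the origin, that |det Aⱼ| ≤ 1 and det Aⱼ < 0 for j = 1,2, and that det[A₁,A₂] > 0. Then P₀ ∪ P₁ ∪ P₂ is locally polynomially convex at the origin. -/

import Mathlib

open Complex ComplexConjugate

/-- The polynomially convex hull of a set `K ⊆ ℂ²`. -/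
def polyHull2 (K : Set (ℂ × ℂ)) : Set (ℂ × ℂ) :=
  { z | ∀ p : MvPolynomial (Fin 2) ℂ,
      ‖MvPolynomial.eval (fun i => if i = 0 then z.1 else z.2) p‖ ≤
        sSup ((fun w : ℂ × ℂ =>
          ‖MvPolynomial.eval (fun i => if i = 0 then w.1 else w.2) p‖) '' K) }

/-- A set `K ⊆ ℂ²` is polynomially convex if it equals its polynomially convex hull. -/
def PolyConvex2 (K : Set (ℂ × ℂ)) : Prop := polyHull2 K = K

/-- The closed Euclidean ball of radius `r` centred at the origin in `ℂ²`. -/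
def eClosedBall (r : ℝ) : Set (ℂ × ℂ) := { z | ‖z.1‖ ^ 2 + ‖z.2‖ ^ 2 ≤ r ^ 2 }

/-- A set is locally polynomially convex at the origin. -/
def LocPolyConvexAt0 (E : Set (ℂ × ℂ)) : Prop :=
  ∃ r > (0 : ℝ), PolyConvex2 (E ∩ eClosedBall r)

/-- The standard real plane `ℝ² = {(x,y) : x, y ∈ ℝ} ⊆ ℂ²`. -/
def plane0 : Set (ℂ × ℂ) := { zw | ∃ x y : ℝ, zw = ((x : ℂ), (y : ℂ)) }

/-- The plane `(A + iI)ℝ² ⊆ ℂ²` for a real `2×2` matrix `A`. -/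
def planeOf (A : Matrix (Fin 2) (Fin 2) ℝ) : Set (ℂ × ℂ) :=
  { zw | ∃ x y : ℝ,
      zw = (((A 0 0 * x + A 0 1 * y : ℝ) : ℂ) + Complex.I * (x : ℂ),
            ((A 1 0 * x + A 1 1 * y : ℝ) : ℂ) + Complex.I * (y : ℂ)) }

/-- A subset `S ⊆ ℂ²` is totally real if `S ∩ iS = {0}`. -/
def TotallyRealSet (S : Set (ℂ × ℂ)) : Prop :=
  S ∩ ((fun v => Complex.I • v) '' S) = {0}


def secX (k R : ℝ) : Set ℂ :=
  {z | ‖z‖ ≤ R ∧ ((0 ≤ z.re ∧ z.im = 0) ∨ z.re ≤ k * |z.im|)}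

lemma secX_compact (k R : ℝ) : IsCompact (secX k R) := by
  apply Metric.isCompact_of_isClosed_isBounded
  · have e : secX k R = {z : ℂ | ‖z‖ ≤ R} ∩
        (({z : ℂ | 0 ≤ z.re} ∩ {z : ℂ | z.im = 0}) ∪ {z : ℂ | z.re ≤ k * |z.im|}) := rfl
    rw [e]
    exact (isClosed_le (by fun_prop) (by fun_prop)).inter
      (((isClosed_le (by fun_prop) (by fun_prop)).inter
        (isClosed_eq (by fun_prop) (by fun_prop))).union
          (isClosed_le (by fun_prop) (by fun_prop)))
  · exact (Metric.isBounded_closedBall (x := (0:ℂ)) (r := R)).subset fun z hz => by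
      simpa using hz.1

lemma secX_star {k R : ℝ} {c : ℂ} (hc : c ∉ secX k R) {t : ℝ} (ht : 1 ≤ t) :
    (t : ℂ) * c ∉ secX k R := by
  intro h
  apply hc
  obtain ⟨h1, h2⟩ := h
  have t0 : 0 < t := by linarith
  refine ⟨?_, ?_⟩
  · rw [norm_mul, Complex.norm_real, Real.norm_of_nonneg t0.le] at h1
    nlinarith [norm_nonneg c]
  · simp only [re_ofReal_mul, im_ofReal_mul, abs_mul, abs_of_pos t0] at h2
    rcases h2 with ⟨h2, h3⟩ | h2
    · left
      exact ⟨nonneg_of_mul_nonneg_right h2 t0, by simpa [t0.ne'] using h3⟩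
    · right
      have : t * c.re ≤ t * (k * |c.im|) := by linarith
      exact le_of_mul_le_mul_left this t0

instance secX_cs (k R : ℝ) : CompactSpace (secX k R) :=
  isCompact_iff_compactSpace.mp (secX_compact k R)

noncomputable abbrev secA (k R : ℝ) : Subalgebra ℂ C(secX k R, ℂ) :=
  (polynomialFunctions (secX k R)).topologicalClosure

instance secA_closed (k R : ℝ) : IsClosed (secA k R : Set C(secX k R, ℂ)) :=
  Subalgebra.isClosed_topologicalClosure _

instance secA_complete (k R : ℝ) : CompleteSpace (secA k R) :=
  (secA_closed k R).completeSpace_coe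

noncomputable def secId (k R : ℝ) : secA k R :=
  ⟨Polynomial.toContinuousMapOnAlgHom (secX k R) Polynomial.X,
    Subalgebra.le_topologicalClosure _ ⟨Polynomial.X, trivial, rfl⟩⟩

lemma secId_apply (k R : ℝ) (z : secX k R) : (secId k R : C(secX k R, ℂ)) z = z := by
  simp [secId]

lemma sec_isUnit {k R : ℝ} {c : ℂ} (hc : c ∉ secX k R) :
    IsUnit (algebraMap ℂ (secA k R) c - secId k R) := by
  by_contra hn
  have hz : c ∈ spectrum ℂ (secId k R) := hn
  have hb := Subalgebra.spectrum_isBounded_connectedComponentIn (secA k R) (secId k R) hz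
  have hsp : spectrum ℂ ((secId k R : secA k R) : C(secX k R, ℂ)) = secX k R := by
    rw [ContinuousMap.spectrum_eq_range]
    ext w
    constructor
    · rintro ⟨z, rfl⟩
      rw [secId_apply]; exact z.2
    · intro hw
      exact ⟨⟨w, hw⟩, secId_apply _ _ _⟩
  rw [hsp] at hb
  have hray : (fun t : ℝ => (t:ℂ) * c) '' Set.Ici 1 ⊆ connectedComponentIn (secX k R)ᶜ c := by
    apply IsPreconnected.subset_connectedComponentIn
    · exact isPreconnected_Ici.image _ (by fun_prop)
    · exact ⟨1, by simp, by simp⟩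
    · rintro _ ⟨t, ht, rfl⟩
      exact secX_star hc ht
  have hb2 := hb.subset hray
  obtain ⟨M, hM⟩ := hb2.exists_norm_le
  by_cases c0 : c = 0
  · -- then R < 0
    have hR : R < 0 := by
      by_contra hR
      apply hc
      subst c0
      exact ⟨by simpa using hR, Or.inl (by simp)⟩
    have : secX k R = ∅ := by
      ext z; simp only [Set.mem_empty_iff_false, iff_false]
      intro h; have := h.1; have := norm_nonneg z; linarith
    apply hn
    have : Subsingleton (secA k R) := by
      constructor
      intro a b
      apply Subtype.ext
      ext z
      exact absurd (this ▸ z.2 : (z:ℂ) ∈ (∅ : Set ℂ)) (by simp)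
    exact isUnit_of_subsingleton _
  · have hcn : 0 < ‖c‖ := norm_pos_iff.mpr c0
    have := hM ((max 1 ((M+1)/‖c‖) : ℝ) * c) ⟨max 1 ((M+1)/‖c‖), by simp, rfl⟩
    rw [norm_mul, Complex.norm_real, Real.norm_of_nonneg (by positivity)] at this
    have h2 : (M+1)/‖c‖ * ‖c‖ ≤ max 1 ((M+1)/‖c‖) * ‖c‖ := by gcongr; exact le_max_right _ _
    rw [div_mul_cancel₀ _ hcn.ne'] at h2
    linarith

lemma secA_approx {k R : ℝ} (f : secA k R) {e : ℝ} (he : 0 < e) :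
    ∃ P : Polynomial ℂ, ∀ z : secX k R, ‖P.eval (z:ℂ) - (f : C(secX k R, ℂ)) z‖ < e := by
  have hf : (f : C(secX k R, ℂ)) ∈ closure (polynomialFunctions (secX k R) : Set C(secX k R, ℂ)) := f.2
  obtain ⟨g, hg, hd⟩ := Metric.mem_closure_iff.mp hf e he
  rw [polynomialFunctions_coe] at hg
  obtain ⟨P, rfl⟩ := hg
  refine ⟨P, fun z => ?_⟩
  rw [dist_comm, dist_eq_norm] at hd
  have := (ContinuousMap.norm_lt_iff _ he).mp hd z
  simpa using this

noncomputable def secEv {k R : ℝ} (z : secX k R) : secA k R →ₐ[ℂ] ℂ :=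
  (ContinuousMap.evalAlgHom ℂ ℂ z).comp (secA k R).val

lemma secEv_apply {k R : ℝ} (z : secX k R) (f : secA k R) : secEv z f = (f : C(secX k R, ℂ)) z := rfl

lemma secEv_cont {k R : ℝ} (z : secX k R) : Continuous (secEv z) :=
  (continuous_eval_const z).comp continuous_subtype_val

lemma sec_unit2 {k R : ℝ} {b : ℂ} (hb : ∀ z ∈ secX k R, ∀ s : ℝ, 0 ≤ s → (s:ℂ) * b * z ≠ 1)
    {s : ℝ} (hs : 0 ≤ s) : IsUnit (1 - ((s:ℂ) * b) • secId k R) := by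
  by_cases h0 : (s:ℂ) * b = 0
  · simp [h0]
  · have : ((s:ℂ)*b)⁻¹ ∉ secX k R := by
      intro h
      exact hb _ h s hs (mul_inv_cancel₀ h0)
    have h1 := sec_isUnit this
    have h2 : (1 - ((s:ℂ) * b) • secId k R) =
        algebraMap ℂ _ ((s:ℂ)*b) * (algebraMap ℂ (secA k R) ((s:ℂ)*b)⁻¹ - secId k R) := by
      rw [mul_sub, ← map_mul, mul_inv_cancel₀ h0, map_one, Algebra.smul_def]
    rw [h2]
    exact ((isUnit_iff_ne_zero.mpr h0).map (algebraMap ℂ (secA k R))).mul h1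

lemma sec_log {k R : ℝ} {b : ℂ} 
    (hb' : ∀ z ∈ secX k R, ∀ s : ℝ, 0 ≤ s → 1 - (s:ℂ) * b * z ∈ slitPlane)
    {s : ℝ} (hs : 0 ≤ s) : ∃ F : secA k R, ∀ z : secX k R,
      secEv z F = Complex.log (1 - (s:ℂ) * b * z) := by
  have hb : ∀ z ∈ secX k R, ∀ s : ℝ, 0 ≤ s → (s:ℂ) * b * z ≠ 1 := by
    intro z hz s hs h
    have := hb' z hz s hs
    rw [h] at this; simp at this
  let G : ℝ → secA k R := fun t => (-b) • secId k R * Ring.inverse (1 - ((t:ℂ) * b) • secId k R)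
  have hG : ContinuousOn G (Set.Icc 0 s) := by
    apply ContinuousOn.mul continuousOn_const
    intro t ht
    obtain ⟨u, hu⟩ := sec_unit2 hb ht.1
    have h1 := NormedRing.inverse_continuousAt u
    rw [hu] at h1
    apply ContinuousAt.continuousWithinAt
    exact ContinuousAt.comp (f := fun t : ℝ => (1 - ((t:ℂ) * b) • secId k R)) h1 (by fun_prop)
  refine ⟨∫ t in (0:ℝ)..s, G t, fun z => ?_⟩
  have hi : IntervalIntegrable G MeasureTheory.volume 0 s :=
    ContinuousOn.intervalIntegrable (by rwa [Set.uIcc_of_le hs])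
  let L : secA k R →L[ℂ] ℂ := ⟨(secEv z).toLinearMap, secEv_cont z⟩
  have h1 := L.intervalIntegral_comp_comm hi
  have hL : ∀ f, L f = secEv z f := fun _ => rfl
  rw [← hL, ← h1]
  have h2 : ∀ t ∈ Set.uIcc 0 s, HasDerivAt (fun t : ℝ => Complex.log (1 - (t:ℂ) * b * z)) (L (G t)) t := by
    intro t ht
    rw [Set.uIcc_of_le hs] at ht
    have h3 : HasDerivAt (fun t : ℝ => (1 - (t:ℂ) * b * z)) (-(b * z)) t := by
      have := (((Complex.ofRealCLM.hasDerivAt (x := t)).mul_const (b * (z:ℂ))).const_sub 1)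
      simpa [mul_assoc] using this
    have h4 := h3.clog_real (hb' z z.2 t ht.1)
    convert h4 using 1
    change secEv z (G t) = _
    have hu := sec_unit2 hb ht.1
    have h5 := congrArg (secEv z) (Ring.mul_inverse_cancel _ hu)
    have hne : 1 - (t:ℂ) * b * z ≠ 0 := slitPlane_ne_zero (hb' z z.2 t ht.1)
    have hid : secEv z (secId k R) = z := secId_apply _ _ _
    simp only [map_mul, map_sub, map_one, map_smul, smul_eq_mul, hid] at h5
    simp only [G, map_mul, map_smul, smul_eq_mul, hid]
    rw [eq_div_iff hne]
    linear_combination (-b * z) * h5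
  rw [intervalIntegral.integral_eq_sub_of_hasDerivAt h2]
  · simp
  · apply ContinuousOn.intervalIntegrable
    rw [Set.uIcc_of_le hs]
    exact L.continuous.comp_continuousOn hG

lemma sec_sqrt_pos {k R : ℝ} {b : ℂ} 
    (hb' : ∀ z ∈ secX k R, ∀ s : ℝ, 0 ≤ s → 1 - (s:ℂ) * b * z ∈ slitPlane)
    {d : ℝ} (hd : 0 < d) : ∃ F : secA k R, ∀ z : secX k R,
      secEv z F = ((d:ℂ) - b * z) ^ (1/2 : ℂ) := by
  obtain ⟨F, hF⟩ := sec_log hb' (inv_nonneg.mpr hd.le)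
  refine ⟨((d:ℂ) ^ (1/2:ℂ)) • NormedSpace.exp ((1/2:ℂ) • F), fun z => ?_⟩
  have h1 : secEv z (NormedSpace.exp ((1/2:ℂ) • F)) = NormedSpace.exp (secEv z ((1/2:ℂ) • F)) :=
    NormedSpace.map_exp_of_mem_ball (𝕂 := ℂ) (secEv z) (secEv_cont z) _
      ((NormedSpace.expSeries_radius_eq_top ℂ (secA k R)).symm ▸ edist_lt_top _ _)
  rw [map_smul, h1, ← Complex.exp_eq_exp_ℂ, map_smul, hF, smul_eq_mul, smul_eq_mul]
  have hm := hb' z z.2 _ (inv_nonneg.mpr hd.le)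
  have hne := slitPlane_ne_zero hm
  have hdc : (d:ℂ) ≠ 0 := by exact_mod_cast hd.ne'
  have : (d:ℂ) - b * z = d * (1 - ((d⁻¹:ℝ):ℂ) * b * z) := by
    push_cast; field_simp
  rw [this, cpow_def_of_ne_zero hdc, cpow_def_of_ne_zero (mul_ne_zero hdc hne),
    Complex.log_ofReal_mul hd hne, ← Complex.exp_add, Complex.ofReal_log hd.le]
  congr 1
  ring


noncomputable def dirb (k t : ℝ) : ℂ := ⟨k + 1, t⟩

lemma dir_neg {k t : ℝ} (hk : 0 ≤ k) {z : ℂ} (hz : z ≠ 0)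
    (h : z.re ≤ k * |z.im|) (him : (dirb k t * z).im = 0) (ht : |t| ≤ 1) : (dirb k t * z).re < 0 := by
  obtain ⟨x, y⟩ := z
  simp only [dirb, mul_im, mul_re] at *
  have h0 : (k + 1) * y = - (t * x) := by linarith
  have hx : x < 0 := by
    by_contra hx
    push Not at hx
    have h1 : (k+1) * |y| ≤ x := by
      have : (k+1) * |y| = |t| * x := by
        rw [← abs_of_nonneg (by linarith : 0 ≤ k + 1), ← abs_mul, h0, abs_neg, abs_mul,
          abs_of_nonneg hx]
      rw [this]
      nlinarith
    have h2 : |y| ≤ 0 := by linarith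
    have hy : y = 0 := abs_eq_zero.mp (le_antisymm h2 (abs_nonneg _))
    subst hy
    simp at h
    apply hz
    have : x = 0 := le_antisymm h hx
    subst this
    rfl
  have h3 : (k+1) * (t * y) = - (t^2 * x) := by linear_combination t * h0
  have h4 : 0 ≤ t * y := by
    have : 0 ≤ (k+1) * (t * y) := by rw [h3]; nlinarith [sq_nonneg t]
    exact nonneg_of_mul_nonneg_right this (by linarith)
  nlinarith

lemma dir_X {k t R : ℝ} (hk : 0 ≤ k) (ht : t = 1 ∨ t = -1) {z : ℂ} (hz : z ∈ secX k R)
    (hz0 : z ≠ 0) : (dirb k t * z).im ≠ 0 ∨ (dirb k t * z).re < 0 := by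
  by_cases him : (dirb k t * z).im = 0
  · right
    rcases hz.2 with h | h
    · exfalso
      obtain ⟨x, y⟩ := z
      obtain ⟨h1, h2⟩ := h
      simp only at h1 h2
      subst h2
      simp only [dirb, mul_im] at him
      have : x = 0 := by rcases ht with rfl | rfl <;> linarith
      subst this
      exact hz0 rfl
    · exact dir_neg hk hz0 h him (by rcases ht with rfl | rfl <;> simp)
  · exact Or.inl him

lemma dir_slit {k t R : ℝ} (hk : 0 ≤ k) (ht : t = 1 ∨ t = -1) :
    ∀ z ∈ secX k R, ∀ s : ℝ, 0 ≤ s → 1 - (s:ℂ) * dirb k t * z ∈ slitPlane := by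
  intro z hz s hs
  by_cases hz0 : z = 0
  · simp [hz0]
  rw [mem_slitPlane_iff, mul_assoc]
  simp only [sub_re, one_re, re_ofReal_mul, sub_im, one_im, im_ofReal_mul]
  rcases dir_X hk ht hz hz0 with h | h
  · rcases hs.eq_or_lt with rfl | hs
    · left; simp
    · right
      rw [zero_sub, neg_ne_zero]
      exact mul_ne_zero hs.ne' h
  · left
    nlinarith

lemma sec_sqrt_zero {k R : ℝ} (hk : 0 ≤ k) {t : ℝ} (ht : t = 1 ∨ t = -1) :
    ∃ F : secA k R, ∀ z : secX k R, secEv z F = (-(dirb k t * z)) ^ (1/2 : ℂ) := by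
  have hc : Continuous (fun q : NNReal × secX k R =>
      (((q.1 : ℝ) : ℂ) - dirb k t * q.2) ^ (1/2 : ℂ)) := by
    rw [continuous_iff_continuousAt]
    rintro ⟨d, z⟩
    have h1 : ContinuousAt (fun w : ℂ => w ^ (1/2:ℂ)) (((d : ℝ) : ℂ) - dirb k t * z) := by
      apply continuousAt_cpow_const_of_re_pos _ (by norm_num)
      by_cases hz0 : (z:ℂ) = 0
      · left; simp [hz0]
      rcases dir_X hk ht z.2 hz0 with h | h
      · right
        rw [sub_im, ofReal_im, zero_sub, neg_ne_zero]
        exact h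
      · left
        rw [sub_re, ofReal_re]
        have := d.2
        have : (0:ℝ) ≤ d := d.2
        linarith
    have hc2 : Continuous (fun q : NNReal × secX k R =>
      (((q.1 : ℝ) : ℂ) - dirb k t * q.2)) := by
      have : Continuous (fun q : NNReal × secX k R => (((q.1 : NNReal) : ℝ) : ℂ)) :=
        Complex.continuous_ofReal.comp (NNReal.continuous_coe.comp continuous_fst)
      exact this.sub (continuous_const.mul (continuous_subtype_val.comp continuous_snd))
    exact ContinuousAt.comp (x := (d, z)) (f := fun q : NNReal × secX k R =>
      (((q.1 : ℝ) : ℂ) - dirb k t * q.2)) h1 hc2.continuousAt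
  let H : C(NNReal, C(secX k R, ℂ)) := ContinuousMap.curry ⟨_, hc⟩
  have hH : ∀ d z, H d z = (((d : ℝ) : ℂ) - dirb k t * z) ^ (1/2 : ℂ) := fun d z => rfl
  have hpos : ∀ d : NNReal, 0 < d → H d ∈ secA k R := by
    intro d hd
    obtain ⟨F, hF⟩ := sec_sqrt_pos (R := R) (dir_slit hk ht) (d := d) (by exact_mod_cast hd)
    have : H d = F := by
      ext z
      rw [hH, ← hF]; rfl
    rw [this]; exact F.2
  have h0 : H 0 ∈ secA k R := by
    have ht : Filter.Tendsto H (nhdsWithin 0 (Set.Ioi 0)) (nhds (H 0)) :=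
      H.continuous.continuousAt.tendsto.mono_left nhdsWithin_le_nhds
    apply (secA_closed k R).mem_of_tendsto ht
    filter_upwards [self_mem_nhdsWithin] with d hd
    exact hpos d hd
  refine ⟨⟨H 0, h0⟩, fun z => ?_⟩
  rw [secEv_apply]
  simp [hH]

lemma cpow_half_sq (z : ℂ) : (z ^ (1/2 : ℂ)) ^ 2 = z := by
  simp

lemma sqrt_prod_pos {k x : ℝ} (hx : 0 ≤ x) :
    (-(dirb k 1 * (x:ℂ))) ^ (1/2 : ℂ) * (-(dirb k (-1) * (x:ℂ))) ^ (1/2 : ℂ) = ‖dirb k 1‖ * x := by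
  rcases hx.eq_or_lt with rfl | hx
  · simp
  have h1 : -(dirb k (-1) * (x:ℂ)) = conj (-(dirb k 1 * (x:ℂ))) := by
    apply Complex.ext <;> simp [dirb]
  have h2 : (-(dirb k 1 * (x:ℂ))).arg ≠ Real.pi := by
    intro h
    rw [Complex.arg_eq_pi_iff] at h
    have := h.2
    simp [dirb] at this
    exact hx.ne' this
  have h3 := Complex.cpow_conj (-(dirb k 1 * (x:ℂ))) (1/2) h2
  have h4 : conj (1/2 : ℂ) = 1/2 := by
    apply Complex.ext <;> simp
  rw [h4] at h3
  have h5 := congrArg conj h3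
  rw [Complex.conj_conj] at h5
  rw [h1, ← h5, Complex.mul_conj, Complex.normSq_eq_norm_sq, ← norm_pow, cpow_half_sq]
  rw [norm_neg, norm_mul, Complex.norm_real, Real.norm_of_nonneg hx.le]
  push_cast; ring

lemma sqrt_prod_neg {k : ℝ} (hk : 0 ≤ k) {z : ℂ} (hz : z.re ≤ k * |z.im|) :
    (-(dirb k 1 * z)) ^ (1/2 : ℂ) * (-(dirb k (-1) * z)) ^ (1/2 : ℂ) = -(‖dirb k 1‖ * z) := by
  by_cases hz0 : z = 0
  · simp [hz0]
  have hs : ∀ t : ℝ, |t| ≤ 1 → -(dirb k t * z) ∈ slitPlane := by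
    intro t ht
    rw [mem_slitPlane_iff]
    by_cases him : (dirb k t * z).im = 0
    · left; have := dir_neg hk hz0 hz him ht
      simpa using this
    · right; rw [neg_im, neg_ne_zero]; exact him
  have hdc : Continuous (dirb k) := by
    have : dirb k = fun t : ℝ => ((k + 1 : ℝ) : ℂ) + t * I := by
      ext t; apply Complex.ext <;> simp [dirb]
    rw [this]; fun_prop
  have hd0 : ∀ t : ℝ, dirb k t ≠ 0 := by
    intro t h
    have := congrArg re h
    simp [dirb] at this
    linarith
  let f : ℝ → ℂ := fun t => (-(dirb k t * z)) ^ (1/2 : ℂ) * (-(dirb k (-t) * z)) ^ (1/2 : ℂ)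
  let g : ℝ → ℂ := fun t => -(‖dirb k t‖ * z)
  have hf1 : ContinuousOn (fun t => (-(dirb k t * z)) ^ (1/2 : ℂ)) (Set.Icc (-1) 1) := by
    intro t ht
    apply ContinuousAt.continuousWithinAt
    exact ContinuousAt.comp (f := fun t => -(dirb k t * z))
      (continuousAt_cpow_const (hs t (abs_le.mpr ht))) (by fun_prop)
  have hf : ContinuousOn f (Set.Icc (-1) 1) := by
    apply hf1.mul
    exact hf1.comp (f := fun t : ℝ => -t) (by fun_prop) (fun t ht => ⟨by linarith [ht.2], by linarith [ht.1]⟩)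
  have hg : ContinuousOn g (Set.Icc (-1) 1) := by
    apply Continuous.continuousOn
    fun_prop
  have hsq : Set.EqOn (f ^ 2) (g ^ 2) (Set.Icc (-1) 1) := by
    intro t ht
    simp only [Pi.pow_apply, f, g, mul_pow, cpow_half_sq, neg_sq]
    have : dirb k t * dirb k (-t) = (‖dirb k t‖:ℂ)^2 := by
      have h1 : dirb k (-t) = conj (dirb k t) := by apply Complex.ext <;> simp [dirb]
      rw [h1, Complex.mul_conj, Complex.normSq_eq_norm_sq]; push_cast; rfl
    rw [← this]; ring
  have hb : f 0 = g 0 := by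
    simp only [f, g, neg_zero]
    rw [← pow_two, cpow_half_sq]
    have : dirb k 0 = ((k+1 : ℝ):ℂ) := by apply Complex.ext <;> simp [dirb]
    rw [this, Complex.norm_real, Real.norm_of_nonneg (by linarith)]
  have := (isPreconnected_Icc (a := (-1:ℝ)) (b := 1)).eq_of_sq_eq hf hg hsq
    (fun {t} _ => by simp [g, hd0, hz0]) (y := 0) (by simp) hb
  exact this (show (1:ℝ) ∈ Set.Icc (-1:ℝ) 1 by simp)

lemma key_g {k R : ℝ} (hk : 0 ≤ k) {e : ℝ} (he : 0 < e) :
    ∃ P : Polynomial ℂ, ∀ z ∈ secX k R,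
      (0 ≤ z.re ∧ z.im = 0 → ‖P.eval z - z‖ ≤ e) ∧ (z.re ≤ k * |z.im| → ‖P.eval z‖ ≤ e) := by
  obtain ⟨F, hF⟩ := sec_sqrt_zero (R := R) hk (t := 1) (Or.inl rfl)
  obtain ⟨G, hG⟩ := sec_sqrt_zero (R := R) hk (t := -1) (Or.inr rfl)
  have hb : (‖dirb k 1‖ : ℂ) ≠ 0 := by
    rw [ofReal_ne_zero, norm_ne_zero_iff]
    intro h
    have := congrArg im h
    simp [dirb] at this
  obtain ⟨P, hP⟩ := secA_approx ((1/2:ℂ) • (secId k R + (‖dirb k 1‖ : ℂ)⁻¹ • (F * G))) he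
  refine ⟨P, fun z hz => ?_⟩
  have h1 := hP ⟨z, hz⟩
  rw [← secEv_apply] at h1
  simp only [map_smul, map_add, map_mul, hF, hG, smul_eq_mul] at h1
  rw [secEv_apply, secId_apply] at h1
  dsimp only at h1
  refine ⟨fun h => ?_, fun h => ?_⟩
  · have hz' : z = ((z.re : ℝ):ℂ) := by apply Complex.ext <;> simp [h.2]
    have h2 := sqrt_prod_pos (k := k) h.1
    rw [← hz'] at h2
    rw [h2, ← mul_assoc, inv_mul_cancel₀ hb] at h1
    refine le_of_eq_of_le (congrArg norm ?_) h1.le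
    ring
  · rw [sqrt_prod_neg hk h, mul_neg, ← mul_assoc, inv_mul_cancel₀ hb] at h1
    refine le_of_eq_of_le (congrArg norm ?_) h1.le
    ring

lemma key_res {k R : ℝ} {c : ℂ} (hc : c ∉ secX k R) :
    ∃ P : Polynomial ℂ, ∀ z ∈ secX k R, ‖P.eval z * (c - z) - 1‖ ≤ 1/2 := by
  obtain ⟨u, hu⟩ := (sec_isUnit hc).exists_left_inv
  have hB : 0 < |R| + ‖c‖ + 1 := by positivity
  obtain ⟨P, hP⟩ := secA_approx u (e := (1/2) / (|R| + ‖c‖ + 1)) (by positivity)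
  refine ⟨P, fun z hz => ?_⟩
  have h1 := hP ⟨z, hz⟩
  have h2 := congrArg (secEv ⟨z, hz⟩) hu
  rw [map_mul, map_sub, map_one, AlgHom.commutes, secEv_apply, secEv_apply, secId_apply] at h2
  simp only [Algebra.algebraMap_self, RingHom.id_apply] at h2
  rw [← h2, ← sub_mul, norm_mul]
  have h3 : ‖c - z‖ ≤ |R| + ‖c‖ + 1 := by
    have := norm_sub_le c z
    have := hz.1
    have := le_abs_self R
    linarith
  calc _ ≤ (1/2) / (|R| + ‖c‖ + 1) * (|R| + ‖c‖ + 1) := by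
        gcongr
    _ = 1/2 := by field_simp

noncomputable abbrev ev2 (z : ℂ × ℂ) : MvPolynomial (Fin 2) ℂ →+* ℂ :=
  MvPolynomial.eval (fun i => if i = 0 then z.1 else z.2)

lemma ev2_aeval (z : ℂ × ℂ) (p : MvPolynomial (Fin 2) ℂ) (G : Polynomial ℂ) :
    ev2 z (Polynomial.aeval p G) = G.eval (ev2 z p) := by
  rw [Polynomial.aeval_def, Polynomial.hom_eval₂]
  have : (ev2 z).comp (algebraMap ℂ (MvPolynomial (Fin 2) ℂ)) = RingHom.id ℂ := by
    ext c
    simp [MvPolynomial.algebraMap_eq]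
  rw [this, Polynomial.eval₂_id]

def inH (z : ℂ × ℂ) (E : Set (ℂ × ℂ)) : Prop :=
  ∀ (f : MvPolynomial (Fin 2) ℂ) (m : ℝ), (∀ w ∈ E, ‖ev2 w f‖ ≤ m) → ‖ev2 z f‖ ≤ m

lemma pow_cmp {a b c R : ℝ} (ha : 0 ≤ a) (hb : 0 ≤ b) (hc : 0 < c)
    (h : ∀ N : ℕ, a ^ N * c ≤ b ^ N * R) : a ≤ b := by
  by_contra hlt
  push Not at hlt
  have ha0 : 0 < a := by linarith
  have h1 : ∀ N : ℕ, c ≤ (b / a) ^ N * R := by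
    intro N
    have := h N
    rw [div_pow, div_mul_eq_mul_div, le_div_iff₀ (by positivity)]
    linarith
  have h2 : Filter.Tendsto (fun N : ℕ => (b / a) ^ N * R) Filter.atTop (nhds (0 * R)) :=
    (tendsto_pow_atTop_nhds_zero_of_lt_one (by positivity) (by rwa [div_lt_one ha0])).mul_const R
  have := ge_of_tendsto' h2 h1
  linarith

lemma kallin_loc {E E' : Set (ℂ × ℂ)} {p : MvPolynomial (Fin 2) ℂ} {R c : ℝ} {z : ℂ × ℂ}
    (hz : inH z (E ∪ E')) (hc : 0 < c) (hR : 0 ≤ R) (hne : E.Nonempty)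
    (hbd : ∀ f : MvPolynomial (Fin 2) ℂ, ∃ L, ∀ w ∈ E ∪ E', ‖ev2 w f‖ ≤ L)
    (hH : ∀ e > 0, ∃ H : Polynomial ℂ, (∀ w ∈ E, ‖H.eval (ev2 w p)‖ ≤ R + e) ∧
      (∀ w ∈ E', ‖H.eval (ev2 w p)‖ ≤ e) ∧ c - e ≤ ‖H.eval (ev2 z p)‖) : inH z E := by
  intro f m hf
  have hm : 0 ≤ m := by
    obtain ⟨w, hw⟩ := hne
    exact (norm_nonneg _).trans (hf w hw)
  obtain ⟨L, hL⟩ := hbd f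
  apply pow_cmp (norm_nonneg _) hm hc (R := R)
  intro N
  have key : ∀ e ∈ Set.Ioi (0:ℝ), ‖ev2 z f‖ ^ N * (c - e) ≤ m ^ N * (R + e) + |L| ^ N * e := by
    intro e he
    have he' : 0 < e := he
    obtain ⟨H, h1, h2, h3⟩ := hH e he
    have := hz (f ^ N * Polynomial.aeval p H) (m ^ N * (R + e) + |L| ^ N * e) ?_
    · rw [map_mul, map_pow, ev2_aeval, norm_mul, norm_pow] at this
      exact (mul_le_mul_of_nonneg_left h3 (by positivity)).trans this
    · intro w hw
      rw [map_mul, map_pow, ev2_aeval, norm_mul, norm_pow]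
      have hw0 := hw
      rcases hw with hw | hw
      · have a1 : ‖ev2 w f‖ ^ N * ‖H.eval (ev2 w p)‖ ≤ m ^ N * (R + e) := by
          gcongr
          · exact hf w hw
          · exact h1 w hw
        have : 0 ≤ |L| ^ N * e := by positivity
        linarith
      · have a1 : ‖ev2 w f‖ ^ N * ‖H.eval (ev2 w p)‖ ≤ |L| ^ N * e := by
          gcongr
          · exact (hL w hw0).trans (le_abs_self _)
          · exact h2 w hw
        have : 0 ≤ m ^ N * (R + e) := by positivity
        linarith
  have t1 : Filter.Tendsto (fun e : ℝ => ‖ev2 z f‖ ^ N * (c - e)) (nhdsWithin 0 (Set.Ioi 0))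
      (nhds (‖ev2 z f‖ ^ N * (c - 0))) :=
    (Continuous.tendsto (by fun_prop) 0).mono_left nhdsWithin_le_nhds
  have t2 : Filter.Tendsto (fun e : ℝ => m ^ N * (R + e) + |L| ^ N * e) (nhdsWithin 0 (Set.Ioi 0))
      (nhds (m ^ N * (R + 0) + |L| ^ N * 0)) :=
    (Continuous.tendsto (by fun_prop) 0).mono_left nhdsWithin_le_nhds
  have := le_of_tendsto_of_tendsto t1 t2 (by
    filter_upwards [self_mem_nhdsWithin] with e he using key e he)
  simpa using this

lemma kallin {E0 E1 : Set (ℂ × ℂ)} {p : MvPolynomial (Fin 2) ℂ} {k R : ℝ} {z : ℂ × ℂ}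
    (hk : 0 ≤ k) (hR : 0 < R) (hz : inH z (E0 ∪ E1)) (hne0 : E0.Nonempty) (hne1 : E1.Nonempty)
    (hbd : ∀ f : MvPolynomial (Fin 2) ℂ, ∃ L, ∀ w ∈ E0 ∪ E1, ‖ev2 w f‖ ≤ L)
    (hpR : ∀ w ∈ E0 ∪ E1, ‖ev2 w p‖ ≤ R)
    (hp0 : ∀ w ∈ E0, 0 ≤ (ev2 w p).re ∧ (ev2 w p).im = 0)
    (hp1 : ∀ w ∈ E1, (ev2 w p).re ≤ k * |(ev2 w p).im|)
    (hnear : ∀ (f : MvPolynomial (Fin 2) ℂ) (m m' : ℝ), (∀ w ∈ E1, ‖ev2 w f‖ ≤ m) → m < m' →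
      ∃ d > 0, ∀ w ∈ E0, ‖ev2 w p‖ < d → ‖ev2 w f‖ ≤ m') : inH z E0 ∨ inH z E1 := by
  have hX : ∀ w ∈ E0 ∪ E1, ev2 w p ∈ secX k R := fun w hw =>
    ⟨hpR w hw, hw.imp (hp0 w) (hp1 w)⟩
  have hzX : ev2 z p ∈ secX k R := by
    by_contra hc
    obtain ⟨G, hG⟩ := key_res hc
    have := hz (Polynomial.aeval p (G * (Polynomial.C (ev2 z p) - Polynomial.X) - 1)) (1/2) ?_
    · rw [ev2_aeval] at this
      simp at this
      norm_num at this
    · intro w hw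
      rw [ev2_aeval]
      simpa using hG _ (hX w hw)
  by_cases hz0 : ev2 z p = 0
  · right
    intro f m hf
    by_contra hlt
    push Not at hlt
    obtain ⟨m', hm1, hm2⟩ := exists_between hlt
    obtain ⟨d', hd'0, hd'⟩ := hnear f m m' hf hm1
    obtain ⟨L, hL⟩ := hbd f
    have hm : 0 ≤ m := by
      obtain ⟨w, hw⟩ := hne1
      exact (norm_nonneg _).trans (hf w hw)
    obtain ⟨d, hd0, hd, hdR⟩ : ∃ d > 0, (∀ w ∈ E0, ‖ev2 w p‖ < d → ‖ev2 w f‖ ≤ m') ∧ d ≤ R :=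
      ⟨min d' R, lt_min hd'0 hR, fun w hw h => hd' w hw (h.trans_le (min_le_left _ _)),
        min_le_right _ _⟩
    have hx1 : 0 ≤ 1 - d / R := by
      rw [sub_nonneg, div_le_one hR]; exact hdR
    have hx2 : 1 - d / R < 1 := by
      have : 0 < d / R := by positivity
      linarith
    have hlim : Filter.Tendsto (fun N : ℕ => (1 - d / R) ^ N * |L|) Filter.atTop (nhds (0 * |L|)) :=
      (tendsto_pow_atTop_nhds_zero_of_lt_one hx1 hx2).mul_const _
    rw [zero_mul] at hlim
    obtain ⟨N, hN⟩ := (hlim.eventually (gt_mem_nhds (lt_of_le_of_lt hm hm1))).exists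
    have key : ∀ e ∈ Set.Ioo (0:ℝ) R, (1 - e / R) ^ N * ‖ev2 z f‖ ≤
        max ((1 + e / R) ^ N * m') ((1 - d / R + e / R) ^ N * |L|) := by
      intro e he
      have he0 : 0 < e := he.1
      have heR : e / R ≤ 1 := by rw [div_le_one hR]; exact he.2.le
      obtain ⟨G, hG⟩ := key_g (R := R) hk he.1
      let Q : Polynomial ℂ := 1 - Polynomial.C ((R:ℂ)⁻¹) * G
      have hQ : ∀ x, Q.eval x = 1 - (R:ℂ)⁻¹ * G.eval x := by intro x; simp [Q]
      have hRn : ‖(R:ℂ)⁻¹‖ = R⁻¹ := by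
        rw [norm_inv, Complex.norm_real, Real.norm_of_nonneg hR.le]
      have hsmall : ∀ y : ℂ, ‖y‖ ≤ e → ‖(R:ℂ)⁻¹ * y‖ ≤ e / R := by
        intro y hy
        rw [norm_mul, hRn, div_eq_inv_mul]
        gcongr
      have := hz ((Polynomial.aeval p Q) ^ N * f)
        (max ((1 + e / R) ^ N * m') ((1 - d / R + e / R) ^ N * |L|)) ?_
      · rw [map_mul, map_pow, ev2_aeval, norm_mul, norm_pow] at this
        refine le_trans ?_ this
        have h1 : 1 - e / R ≤ ‖Q.eval (ev2 z p)‖ := by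
          rw [hQ]
          have h2 := hsmall _ ((hG _ hzX).2 (by rw [hz0]; simp))
          have h3 := norm_sub_norm_le (1:ℂ) ((R:ℂ)⁻¹ * G.eval (ev2 z p))
          rw [norm_one] at h3
          linarith
        gcongr
      · intro w hw
        have hw0 := hw
        rw [map_mul, map_pow, ev2_aeval, norm_mul, norm_pow, hQ]
        rcases hw with hw | hw
        · have h1 := hp0 w hw
          have hpe : ev2 w p = (((ev2 w p).re : ℝ) : ℂ) := by
            apply Complex.ext <;> simp only [ofReal_re, ofReal_im]
            exact h1.2
          set x := (ev2 w p).re with hx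
          have hxn : ‖ev2 w p‖ = x := by rw [hpe, Complex.norm_real, Real.norm_of_nonneg h1.1]
          have hxR : x ≤ R := hxn ▸ hpR w hw0
          have h2 := hsmall _ ((hG _ (hX w hw0)).1 h1)
          have h3 : ‖1 - (R:ℂ)⁻¹ * G.eval (ev2 w p)‖ ≤ (1 - x / R) + e / R := by
            have : 1 - (R:ℂ)⁻¹ * G.eval (ev2 w p) = ((1 - x / R : ℝ) : ℂ) -
              (R:ℂ)⁻¹ * (G.eval (ev2 w p) - ev2 w p) := by
              have h9 : ((1 - x / R : ℝ) : ℂ) = 1 - (R:ℂ)⁻¹ * ev2 w p := by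
                rw [hpe]; push_cast; ring
              rw [h9]; ring
            rw [this]
            refine (norm_sub_le _ _).trans ?_
            rw [Complex.norm_real, Real.norm_of_nonneg (by rw [sub_nonneg, div_le_one hR]; exact hxR)]
            linarith
          by_cases hxd : x < d
          · apply le_max_of_le_left
            have h4 := hd w hw (by rw [hxn]; exact hxd)
            have h5 : 0 ≤ x / R := div_nonneg h1.1 hR.le
            gcongr
            linarith
          · apply le_max_of_le_right
            push Not at hxd
            have h5 : d / R ≤ x / R := by gcongr
            gcongr
            · linarith
            · exact (hL w hw0).trans (le_abs_self _)
        · apply le_max_of_le_left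
          have h2 := hsmall _ ((hG _ (hX w hw0)).2 (hp1 w hw))
          have h3 : ‖1 - (R:ℂ)⁻¹ * G.eval (ev2 w p)‖ ≤ 1 + e / R := by
            refine (norm_sub_le _ _).trans ?_
            rw [norm_one]; linarith
          have h4 := hf w hw
          gcongr
          linarith
    have t1 : Filter.Tendsto (fun e : ℝ => (1 - e / R) ^ N * ‖ev2 z f‖) (nhdsWithin 0 (Set.Ioi 0))
        (nhds ((1 - 0 / R) ^ N * ‖ev2 z f‖)) :=
      (Continuous.tendsto (by fun_prop) 0).mono_left nhdsWithin_le_nhds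
    have t2 : Filter.Tendsto (fun e : ℝ => max ((1 + e / R) ^ N * m') ((1 - d / R + e / R) ^ N * |L|))
        (nhdsWithin 0 (Set.Ioi 0))
        (nhds (max ((1 + 0 / R) ^ N * m') ((1 - d / R + 0 / R) ^ N * |L|))) :=
      (Continuous.tendsto (by fun_prop) 0).mono_left nhdsWithin_le_nhds
    have := le_of_tendsto_of_tendsto t1 t2 (by
      filter_upwards [Ioo_mem_nhdsGT hR] with e he using key e he)
    simp only [zero_div, sub_zero, one_pow, one_mul, add_zero, le_max_iff] at this
    rcases this with h | h <;> linarith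
  · have hc : 0 < ‖ev2 z p‖ := norm_pos_iff.mpr hz0
    rcases hzX.2 with h | h
    · left
      refine kallin_loc (p := p) hz hc hR.le hne0 hbd fun e he => ?_
      obtain ⟨G, hG⟩ := key_g (R := R) hk he
      refine ⟨G, fun w hw => ?_, fun w hw => ?_, ?_⟩
      · have h1 := (hG _ (hX w (Or.inl hw))).1 (hp0 w hw)
        have h2 := hpR w (Or.inl hw)
        have h3 := norm_sub_norm_le (G.eval (ev2 w p)) (ev2 w p)
        linarith
      · exact (hG _ (hX w (Or.inr hw))).2 (hp1 w hw)
      · have h1 := (hG _ hzX).1 h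
        have h3 := norm_sub_norm_le (ev2 z p) (G.eval (ev2 z p))
        rw [norm_sub_rev] at h3
        linarith
    · right
      rw [Set.union_comm] at hz hbd
      refine kallin_loc (p := p) hz hc hR.le hne1 hbd fun e he => ?_
      obtain ⟨G, hG⟩ := key_g (R := R) hk he
      refine ⟨Polynomial.X - G, fun w hw => ?_, fun w hw => ?_, ?_⟩
      · have h1 := (hG _ (hX w (Or.inr hw))).2 (hp1 w hw)
        have h2 := hpR w (Or.inr hw)
        have h3 := norm_sub_le (ev2 w p) (G.eval (ev2 w p))
        rw [Polynomial.eval_sub, Polynomial.eval_X]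
        linarith
      · rw [Polynomial.eval_sub, Polynomial.eval_X, norm_sub_rev]
        exact (hG _ (hX w (Or.inl hw))).1 (hp0 w hw)
      · have h1 := (hG _ hzX).2 h
        have h3 := norm_sub_norm_le (ev2 z p) (G.eval (ev2 z p))
        rw [Polynomial.eval_sub, Polynomial.eval_X]
        linarith

lemma le_of_sq_le_sq_aux {x y : ℝ} (h : x ^ 2 ≤ y ^ 2) (hy : 0 ≤ y) : x ≤ y :=
  (le_abs_self x).trans (abs_le_of_sq_le_sq h hy)

lemma ev2_cont (f : MvPolynomial (Fin 2) ℂ) : Continuous (fun w : ℂ × ℂ => ev2 w f) := by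
  have h : Continuous (fun w : ℂ × ℂ => (fun i : Fin 2 => if i = 0 then w.1 else w.2)) := by
    apply continuous_pi
    intro i
    fin_cases i
    · simpa using continuous_fst
    · simpa using continuous_snd
  exact (MvPolynomial.continuous_eval f).comp h

lemma eBall_compact (r : ℝ) : IsCompact (eClosedBall r) := by
  apply Metric.isCompact_of_isClosed_isBounded
  · exact isClosed_le (f := fun z : ℂ × ℂ => ‖z.1‖ ^ 2 + ‖z.2‖ ^ 2) (by fun_prop) (by fun_prop)
  · refine (Metric.isBounded_closedBall (x := (0:ℂ × ℂ)) (r := |r|)).subset fun z hz => ?_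
    have hz' : ‖z.1‖ ^ 2 + ‖z.2‖ ^ 2 ≤ r ^ 2 := hz
    rw [mem_closedBall_zero_iff, Prod.norm_def]
    apply max_le
    · apply le_of_sq_le_sq_aux _ (abs_nonneg _)
      rw [sq_abs]; nlinarith [sq_nonneg ‖z.2‖]
    · apply le_of_sq_le_sq_aux _ (abs_nonneg _)
      rw [sq_abs]; nlinarith [sq_nonneg ‖z.1‖]

lemma bdd_ball (r : ℝ) (f : MvPolynomial (Fin 2) ℂ) : ∃ L, ∀ w ∈ eClosedBall r, ‖ev2 w f‖ ≤ L :=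
  (eBall_compact r).exists_bound_of_continuousOn (ev2_cont f).continuousOn

lemma plane0_mem (z : ℂ × ℂ) : z ∈ plane0 ↔ z.1.im = 0 ∧ z.2.im = 0 := by
  constructor
  · rintro ⟨x, y, rfl⟩; simp
  · rintro ⟨h1, h2⟩
    refine ⟨z.1.re, z.2.re, ?_⟩
    apply Prod.ext <;> apply Complex.ext <;> simp [h1, h2]

lemma plane0_closed : IsClosed plane0 := by
  have : plane0 = {z : ℂ × ℂ | z.1.im = 0} ∩ {z : ℂ × ℂ | z.2.im = 0} := by
    ext z; exact plane0_mem z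
  rw [this]
  exact (isClosed_eq (by fun_prop) (by fun_prop)).inter (isClosed_eq (by fun_prop) (by fun_prop))

lemma inH_of_hull {z : ℂ × ℂ} {K : Set (ℂ × ℂ)} (hne : K.Nonempty) (h : z ∈ polyHull2 K) :
    inH z K := by
  intro f m hm
  refine (h f).trans (csSup_le (hne.image _) ?_)
  rintro _ ⟨w, hw, rfl⟩
  exact hm w hw

lemma hull_of_inH {z : ℂ × ℂ} {K : Set (ℂ × ℂ)} {r : ℝ} (hK : K ⊆ eClosedBall r) (h : inH z K) :
    z ∈ polyHull2 K := by
  intro f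
  apply h
  intro w hw
  obtain ⟨L, hL⟩ := bdd_ball r f
  refine le_csSup ⟨L, ?_⟩ ⟨w, hw, rfl⟩
  rintro _ ⟨v, hv, rfl⟩
  exact hL v (hK hv)

lemma inH_ball {z : ℂ × ℂ} {r : ℝ} (hr : 0 < r) (h : inH z (eClosedBall r)) : z ∈ eClosedBall r := by
  change ‖z.1‖ ^ 2 + ‖z.2‖ ^ 2 ≤ r ^ 2
  set n := ‖z.1‖ ^ 2 + ‖z.2‖ ^ 2 with hn
  have hn0 : 0 ≤ n := by positivity
  have h1 := h (MvPolynomial.C (conj z.1) * MvPolynomial.X 0 +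
    MvPolynomial.C (conj z.2) * MvPolynomial.X 1) (Real.sqrt n * r) ?_
  · simp only [map_add, map_mul, MvPolynomial.eval_C, MvPolynomial.eval_X] at h1
    have h2 : conj z.1 * z.1 + conj z.2 * z.2 = (n : ℂ) := by
      rw [Complex.conj_mul', Complex.conj_mul', hn]; push_cast; ring
    simp only [if_true, one_ne_zero, if_false] at h1
    rw [h2, Complex.norm_real, Real.norm_of_nonneg hn0] at h1
    have h3 := Real.sq_sqrt hn0
    have h4 := Real.sqrt_nonneg n
    by_contra hlt
    push Not at hlt
    have h5 : r < Real.sqrt n := by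
      apply Real.lt_sqrt_of_sq_lt hlt
    nlinarith
  · intro w hw
    have hw' : ‖w.1‖ ^ 2 + ‖w.2‖ ^ 2 ≤ r ^ 2 := hw
    simp only [map_add, map_mul, MvPolynomial.eval_C, MvPolynomial.eval_X]
    simp only [if_true, one_ne_zero, if_false]
    refine (norm_add_le _ _).trans ?_
    rw [norm_mul, norm_mul, Complex.norm_conj, Complex.norm_conj]
    apply le_of_sq_le_sq_aux _ (by positivity)
    rw [mul_pow, Real.sq_sqrt hn0]
    have : (‖z.1‖ * ‖w.1‖ + ‖z.2‖ * ‖w.2‖)^2 ≤ n * (‖w.1‖ ^ 2 + ‖w.2‖ ^ 2) := by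
      rw [hn]; nlinarith [sq_nonneg (‖z.1‖ * ‖w.2‖ - ‖z.2‖ * ‖w.1‖)]
    refine this.trans ?_
    gcongr

lemma inH_real {z : ℂ × ℂ} {r : ℝ} {E : Set (ℂ × ℂ)} (hr : 0 < r) (h : inH z E) (j : Fin 2)
    (hE : ∀ w ∈ E, (if j = 0 then w.1 else w.2).im = 0 ∧ ‖(if j = 0 then w.1 else w.2)‖ ≤ r) :
    (if j = 0 then z.1 else z.2).im = 0 := by
  set u := (if j = 0 then z.1 else z.2) with hu
  have hM0 : 0 ≤ (r + |u.re|)^2 := by positivity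
  have h1 := h (MvPolynomial.C (((r + |u.re|)^2 : ℝ) : ℂ) -
    (MvPolynomial.X j - MvPolynomial.C ((u.re : ℝ) : ℂ)) ^ 2) ((r + |u.re|)^2) ?_
  · simp only [map_sub, map_pow, MvPolynomial.eval_C, MvPolynomial.eval_X] at h1
    rw [← hu] at h1
    have h2 : (((r + |u.re|)^2 : ℝ) : ℂ) - (u - (u.re : ℂ))^2 = (((r + |u.re|)^2 + u.im ^ 2 : ℝ) : ℂ) := by
      have : u - (u.re : ℂ) = u.im * I := by
        apply Complex.ext <;> simp
      rw [this, mul_pow, I_sq]; push_cast; ring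
    rw [h2, Complex.norm_real, Real.norm_of_nonneg (by positivity)] at h1
    have : u.im ^ 2 ≤ 0 := by linarith
    exact pow_eq_zero_iff (two_ne_zero) |>.mp (le_antisymm this (sq_nonneg _))
  · intro w hw
    obtain ⟨h2, h3⟩ := hE w hw
    simp only [map_sub, map_pow, MvPolynomial.eval_C, MvPolynomial.eval_X]
    set v := (if j = 0 then w.1 else w.2) with hv
    have hvr : v = (v.re : ℂ) := by apply Complex.ext <;> simp [h2]
    rw [hvr, ← ofReal_sub, ← ofReal_pow, ← ofReal_sub, Complex.norm_real, Real.norm_eq_abs, abs_le]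
    have h4 : |v.re| ≤ r := (Complex.abs_re_le_norm v).trans h3
    have h5 : |v.re - u.re| ≤ r + |u.re| := by
      have := abs_sub v.re u.re
      linarith
    have h6 : (v.re - u.re)^2 ≤ (r + |u.re|)^2 := by
      rw [← sq_abs (v.re - u.re)]; gcongr
    constructor <;> nlinarith [sq_nonneg (v.re - u.re)]

noncomputable def quadP (a b c : ℝ) : MvPolynomial (Fin 2) ℂ :=
  MvPolynomial.C (a:ℂ) * MvPolynomial.X 0 ^ 2 +
    MvPolynomial.C ((2 * b : ℝ):ℂ) * (MvPolynomial.X 0 * MvPolynomial.X 1) +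
    MvPolynomial.C (c:ℂ) * MvPolynomial.X 1 ^ 2

lemma quadP_ev (a b c : ℝ) (z : ℂ × ℂ) : ev2 z (quadP a b c) =
    a * z.1 ^ 2 + ((2 * b : ℝ):ℂ) * (z.1 * z.2) + c * z.2 ^ 2 := by
  simp [quadP]

lemma quad_plane {a b c : ℝ} (ha : 0 < a) (hd : 0 < a * c - b ^ 2) (A : Matrix (Fin 2) (Fin 2) ℝ)
    (hA : a * A 0 1 + b * A 1 1 = b * A 0 0 + c * A 1 0) (hdet : -1 ≤ A.det) {z : ℂ × ℂ}
    (hz : z ∈ planeOf A) :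
    (ev2 z (quadP a b c)).re ≤ (|A 0 0 + A 1 1| / 2) * |(ev2 z (quadP a b c)).im| := by
  obtain ⟨x, y, rfl⟩ := hz
  rw [quadP_ev]
  set p := A 0 0 * x + A 0 1 * y with hp
  set q := A 1 0 * x + A 1 1 * y with hq
  have hre : ((a:ℂ) * ((p:ℂ) + I * x) ^ 2 + ((2 * b : ℝ):ℂ) * (((p:ℂ) + I * x) * ((q:ℂ) + I * y))
      + c * ((q:ℂ) + I * y) ^ 2).re =
      a * (p ^ 2 - x ^ 2) + 2 * b * (p * q - x * y) + c * (q ^ 2 - y ^ 2) := by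
    simp [pow_two]
  have him : ((a:ℂ) * ((p:ℂ) + I * x) ^ 2 + ((2 * b : ℝ):ℂ) * (((p:ℂ) + I * x) * ((q:ℂ) + I * y))
      + c * ((q:ℂ) + I * y) ^ 2).im =
      2 * (a * p * x + b * (p * y + q * x) + c * q * y) := by
    simp [pow_two]; ring
  rw [hre, him]
  rw [Matrix.det_fin_two] at hdet
  have hQ : 0 ≤ a * x ^ 2 + 2 * b * x * y + c * y ^ 2 := by
    have : 0 ≤ a * (a * x ^ 2 + 2 * b * x * y + c * y ^ 2) := by
      nlinarith [sq_nonneg (a * x + b * y), mul_nonneg hd.le (sq_nonneg y)]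
    exact nonneg_of_mul_nonneg_right this ha
  set m := a * p * x + b * (p * y + q * x) + c * q * y with hm
  have hid : a * (p ^ 2 - x ^ 2) + 2 * b * (p * q - x * y) + c * (q ^ 2 - y ^ 2) =
      (A 0 0 + A 1 1) * m - (1 + (A 0 0 * A 1 1 - A 0 1 * A 1 0)) *
        (a * x ^ 2 + 2 * b * x * y + c * y ^ 2) := by
    rw [hm, hp, hq]
    linear_combination (-(x * (A 1 0 * x + A 1 1 * y) - y * (A 0 0 * x + A 0 1 * y))) * hA
  rw [hid]
  have h1 : (A 0 0 + A 1 1) * m ≤ |A 0 0 + A 1 1| * |m| := by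
    rw [← abs_mul]; exact le_abs_self _
  have h2 : |2 * m| = 2 * |m| := by rw [abs_mul]; norm_num
  rw [h2]
  have h3 : 0 ≤ (1 + (A 0 0 * A 1 1 - A 0 1 * A 1 0)) *
        (a * x ^ 2 + 2 * b * x * y + c * y ^ 2) := mul_nonneg (by linarith) hQ
  linarith

lemma exists_Q (A B : Matrix (Fin 2) (Fin 2) ℝ) (h : 0 < (A * B - B * A).det) :
    ∃ a b c : ℝ, 0 < a ∧ 0 < a * c - b ^ 2 ∧ a * A 0 1 + b * A 1 1 = b * A 0 0 + c * A 1 0 ∧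
      a * B 0 1 + b * B 1 1 = b * B 0 0 + c * B 1 0 := by
  rw [Matrix.det_fin_two] at h
  simp only [Matrix.sub_apply, Matrix.mul_apply, Fin.sum_univ_two] at h
  obtain ⟨w, hw⟩ : ∃ w, w = A 1 0 * B 0 0 + A 1 1 * B 1 0 - (B 1 0 * A 0 0 + B 1 1 * A 1 0) := ⟨_, rfl⟩
  obtain ⟨x, hx⟩ : ∃ x, x = A 0 0 * B 0 0 + A 0 1 * B 1 0 - (B 0 0 * A 0 0 + B 0 1 * A 1 0) := ⟨_, rfl⟩
  obtain ⟨y, hy⟩ : ∃ y, y = A 0 0 * B 0 1 + A 0 1 * B 1 1 - (B 0 0 * A 0 1 + B 0 1 * A 1 1) := ⟨_, rfl⟩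
  have hdet : 0 < - (y * w) - x ^ 2 := by
    have : - (y * w) - x ^ 2 = (A 0 0 * B 0 0 + A 0 1 * B 1 0 - (B 0 0 * A 0 0 + B 0 1 * A 1 0)) * (A 1 0 * B 0 1 + A 1 1 * B 1 1 - (B 1 0 * A 0 1 + B 1 1 * A 1 1)) - (A 0 0 * B 0 1 + A 0 1 * B 1 1 - (B 0 0 * A 0 1 + B 0 1 * A 1 1)) * (A 1 0 * B 0 0 + A 1 1 * B 1 0 - (B 1 0 * A 0 0 + B 1 1 * A 1 0)) := by
      rw [hw, hx, hy]; ring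
    rw [this]; exact h
  have e1 : w * A 0 1 + (-x) * A 1 1 = (-x) * A 0 0 + (-y) * A 1 0 := by rw [hw, hx, hy]; ring
  have e2 : w * B 0 1 + (-x) * B 1 1 = (-x) * B 0 0 + (-y) * B 1 0 := by rw [hw, hx, hy]; ring
  rcases lt_trichotomy w 0 with hw0 | hw0 | hw0
  · exact ⟨-w, x, y, by linarith, by linarith, by linarith, by linarith⟩
  · exfalso
    subst hw0
    nlinarith [sq_nonneg x]
  · exact ⟨w, -x, -y, hw0, by linarith, e1, e2⟩

theorem stmt_15 (A₁ A₂ : Matrix (Fin 2) (Fin 2) ℝ)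
    (htr0 : TotallyRealSet plane0)
    (htr1 : TotallyRealSet (planeOf A₁)) (htr2 : TotallyRealSet (planeOf A₂))
    (hpair01 : LocPolyConvexAt0 (plane0 ∪ planeOf A₁))
    (hpair02 : LocPolyConvexAt0 (plane0 ∪ planeOf A₂))
    (hpair12 : LocPolyConvexAt0 (planeOf A₁ ∪ planeOf A₂))
    (habs1 : |A₁.det| ≤ 1) (habs2 : |A₂.det| ≤ 1)
    (hdet1 : A₁.det < 0) (hdet2 : A₂.det < 0)
    (hcomm : 0 < (A₁ * A₂ - A₂ * A₁).det) :
    LocPolyConvexAt0 (plane0 ∪ planeOf A₁ ∪ planeOf A₂) := by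
  obtain ⟨r, hr, hPC⟩ := hpair12
  refine ⟨r, hr, ?_⟩
  set E0 := plane0 ∩ eClosedBall r with hE0
  set E1 := (planeOf A₁ ∪ planeOf A₂) ∩ eClosedBall r with hE1
  have hK : (plane0 ∪ planeOf A₁ ∪ planeOf A₂) ∩ eClosedBall r = E0 ∪ E1 := by
    rw [hE0, hE1, ← Set.union_inter_distrib_right, Set.union_assoc]
  rw [hK]
  have hsub : E0 ∪ E1 ⊆ eClosedBall r :=
    Set.union_subset Set.inter_subset_right Set.inter_subset_right
  have h0B : (0 : ℂ × ℂ) ∈ eClosedBall r := by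
    change ‖(0 : ℂ × ℂ).1‖ ^ 2 + ‖(0 : ℂ × ℂ).2‖ ^ 2 ≤ r ^ 2
    simp; positivity
  have h00 : (0 : ℂ × ℂ) ∈ E0 := ⟨(plane0_mem 0).mpr (by simp), h0B⟩
  have h01 : (0 : ℂ × ℂ) ∈ E1 := ⟨Or.inl ⟨0, 0, by simp; rfl⟩, h0B⟩
  apply Set.Subset.antisymm
  swap
  · intro z hz
    exact hull_of_inH hsub fun f m hm => hm z hz
  intro z hz
  have hz := inH_of_hull ⟨0, Or.inl h00⟩ hz
  have hzB : z ∈ eClosedBall r := inH_ball hr fun f m hm => hz f m fun w hw => hm w (hsub hw)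
  obtain ⟨a, b, c, ha, hd, hs1, hs2⟩ := exists_Q A₁ A₂ hcomm
  obtain ⟨R, hR⟩ := bdd_ball r (quadP a b c)
  have hreal : ∀ w ∈ E0, ∃ x y : ℝ, w = ((x:ℂ), (y:ℂ)) ∧
      ev2 w (quadP a b c) = ((a * x ^ 2 + 2 * b * x * y + c * y ^ 2 : ℝ) : ℂ) := by
    intro w hw
    obtain ⟨x, y, rfl⟩ := hw.1
    refine ⟨x, y, rfl, ?_⟩
    rw [quadP_ev]; push_cast; ring
  have hpos : ∀ x y : ℝ, a * (a * x ^ 2 + 2 * b * x * y + c * y ^ 2) =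
      (a * x + b * y) ^ 2 + (a * c - b ^ 2) * y ^ 2 := by intro x y; ring
  have hmain := kallin (E0 := E0) (E1 := E1) (p := quadP a b c)
    (k := |A₁ 0 0 + A₁ 1 1| / 2 + |A₂ 0 0 + A₂ 1 1| / 2) (R := |R| + 1) (z := z)
    (by positivity) (by positivity) hz ⟨0, h00⟩ ⟨0, h01⟩
    (fun f => (bdd_ball r f).imp fun L hL w hw => hL w (hsub hw))
    (fun w hw => (hR w (hsub hw)).trans ((le_abs_self R).trans (by linarith)))
    (by
      intro w hw
      obtain ⟨x, y, -, h⟩ := hreal w hw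
      rw [h, ofReal_re, ofReal_im]
      refine ⟨?_, rfl⟩
      have : 0 ≤ a * (a * x ^ 2 + 2 * b * x * y + c * y ^ 2) := by
        rw [hpos]; positivity
      exact nonneg_of_mul_nonneg_right this ha)
    (by
      rintro w ⟨hw | hw, -⟩
      · refine (quad_plane ha hd A₁ hs1 (abs_le.mp habs1).1 hw).trans ?_
        gcongr
        have := abs_nonneg (A₂ 0 0 + A₂ 1 1)
        linarith
      · refine (quad_plane ha hd A₂ hs2 (abs_le.mp habs2).1 hw).trans ?_
        gcongr
        have := abs_nonneg (A₁ 0 0 + A₁ 1 1)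
        linarith)
    (by
      intro f m m' hf hmm
      have hcomp : IsCompact (E0 ∩ {w | m' ≤ ‖ev2 w f‖}) := by
        apply IsCompact.inter_right
        · exact (eBall_compact r).inter_left plane0_closed
        · exact isClosed_le continuous_const (ev2_cont f).norm
      by_cases hne : (E0 ∩ {w | m' ≤ ‖ev2 w f‖}).Nonempty
      · obtain ⟨w0, hw0, hmin⟩ := hcomp.exists_isMinOn hne
          (ev2_cont (quadP a b c)).norm.continuousOn
        refine ⟨‖ev2 w0 (quadP a b c)‖, ?_, ?_⟩
        · rw [gt_iff_lt, norm_pos_iff]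
          intro h0
          obtain ⟨x, y, hxy, h⟩ := hreal w0 hw0.1
          rw [h0] at h
          have h' : a * x ^ 2 + 2 * b * x * y + c * y ^ 2 = 0 := by exact_mod_cast h.symm
          have h2 := hpos x y
          rw [h', mul_zero] at h2
          have hy2 : y ^ 2 = 0 := by
            have h3 : (a * c - b ^ 2) * y ^ 2 = 0 := by
              nlinarith [sq_nonneg (a * x + b * y), mul_nonneg hd.le (sq_nonneg y)]
            simpa [hd.ne'] using h3
          have hy : y = 0 := by simpa using hy2
          subst hy
          have hx : x = 0 := by
            have : (a * x) ^ 2 = 0 := by linarith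
            simpa [ha.ne'] using this
          subst hx
          have hw00 : w0 = 0 := by rw [hxy]; simp
          have h4 := hf 0 h01
          have h5 : m' ≤ ‖ev2 w0 f‖ := hw0.2
          rw [hw00] at h5
          linarith
        · intro w hw hlt
          by_contra hcon
          push Not at hcon
          have h6 : ‖ev2 w0 (quadP a b c)‖ ≤ ‖ev2 w (quadP a b c)‖ := hmin ⟨hw, hcon.le⟩
          linarith
      · refine ⟨1, one_pos, fun w hw _ => ?_⟩
        by_contra hcon
        push Not at hcon
        exact hne ⟨w, hw, hcon.le⟩)
  rcases hmain with h | h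
  · left
    refine ⟨(plane0_mem z).mpr ⟨?_, ?_⟩, hzB⟩
    · have := inH_real hr h 0 (by
        intro w hw
        refine ⟨by simpa using ((plane0_mem w).mp hw.1).1, ?_⟩
        have hw' : ‖w.1‖ ^ 2 + ‖w.2‖ ^ 2 ≤ r ^ 2 := hw.2
        simp only [if_true]
        apply le_of_sq_le_sq_aux _ hr.le
        nlinarith [sq_nonneg ‖w.2‖])
      simpa using this
    · have := inH_real hr h 1 (by
        intro w hw
        refine ⟨by simpa using ((plane0_mem w).mp hw.1).2, ?_⟩
        have hw' : ‖w.1‖ ^ 2 + ‖w.2‖ ^ 2 ≤ r ^ 2 := hw.2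
        simp only [one_ne_zero, if_false]
        apply le_of_sq_le_sq_aux _ hr.le
        nlinarith [sq_nonneg ‖w.1‖])
      simpa using this
  · right
    have h1 := hull_of_inH (r := r) (K := E1) Set.inter_subset_right h
    have h2 : polyHull2 E1 = E1 := hPC
    rwa [h2] at h1
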